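/- arXiv:2404.14793 — 3 statements merged into one kernel-verified Lean document; each statement's English description precedes it below -/
import Mathlib

section
/- Let Ω ⊂ ℂⁿ be a bounded pseudoconvex domain and φ ∈ SPSH(Ω). For every compact subset K of Ω there exists a constant C_K such that for all k ≥ 1 and all z ∈ K, k^{−n} B_{kφ}(z) e^{−kφ(z)} ≤ C_K. -/
open MeasureTheory Complex Filter
open scoped ENNReal Topology BigOperators Real ComplexOrder

noncomputable section

variable {n : ℕ}

/-- Wirtinger derivative `∂f/∂z_j` of a function on `ℂⁿ`. -/
def wDeriv (f : (Fin n → ℂ) → ℂ) (j : Fin n) (z : Fin n → ℂ) : ℂ :=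
  (1/2) * (fderiv ℝ f z (Pi.single j 1) - Complex.I * fderiv ℝ f z (Pi.single j Complex.I))

/-- Wirtinger derivative `∂f/∂z̄_j` of a function on `ℂⁿ`. -/
def wDerivBar (f : (Fin n → ℂ) → ℂ) (j : Fin n) (z : Fin n → ℂ) : ℂ :=
  (1/2) * (fderiv ℝ f z (Pi.single j 1) + Complex.I * fderiv ℝ f z (Pi.single j Complex.I))

/-- Complex Hessian `H_φ(z) = (∂²φ/∂z_j∂z̄_k)_{j,k}` of a real-valued function on `ℂⁿ`. -/
def cHessian (φ : (Fin n → ℂ) → ℝ) (z : Fin n → ℂ) : Matrix (Fin n) (Fin n) ℂ :=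
  Matrix.of fun j k => wDerivBar (fun w => wDeriv (fun v => (φ v : ℂ)) j w) k z

/-- A function is plurisubharmonic on `Ω` if it is upper semicontinuous on `Ω` and satisfies
the sub-mean value inequality on every closed complex disc contained in `Ω`. -/
def PlurisubharmonicOn (Ω : Set (Fin n → ℂ)) (f : (Fin n → ℂ) → ℝ) : Prop :=
  UpperSemicontinuousOn f Ω ∧
  ∀ a b : Fin n → ℂ, (∀ ζ : ℂ, ‖ζ‖ ≤ 1 → a + ζ • b ∈ Ω) →
    f a ≤ (2 * π)⁻¹ * ∫ θ in (0:ℝ)..(2*π), f (a + Complex.exp (θ * Complex.I) • b)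

/-- A (bounded) open set `Ω ⊆ ℂⁿ` is pseudoconvex iff `z ↦ -log dist(z, Ωᶜ)` is
plurisubharmonic on `Ω`. -/
def Pseudoconvex (Ω : Set (Fin n → ℂ)) : Prop :=
  PlurisubharmonicOn Ω fun z => -Real.log (Metric.infDist z Ωᶜ)

/-- `φ ∈ SPSH(Ω)`: smooth on `Ω` with positive definite complex Hessian at every point of `Ω`. -/
def SPSHOn (Ω : Set (Fin n → ℂ)) (φ : (Fin n → ℂ) → ℝ) : Prop :=
  ContDiffOn ℝ (⊤ : ℕ∞) φ Ω ∧ ∀ z ∈ Ω, (cHessian φ z).PosDef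

/-- Squared weighted Bergman norm `∫_Ω |f|² e^{-ψ} dλ` (as an extended real,
so that finiteness encodes square-integrability). -/
def wnorm2 (Ω : Set (Fin n → ℂ)) (ψ : (Fin n → ℂ) → ℝ) (f : (Fin n → ℂ) → ℂ) : ℝ≥0∞ :=
  ∫⁻ z in Ω, ENNReal.ofReal (‖f z‖ ^ 2 * Real.exp (-ψ z))

/-- Membership in the weighted Bergman space `H(ψ)`: holomorphic on `Ω` and
`∫_Ω |f|² e^{-ψ} dλ < ∞`. -/
def MemBergman (Ω : Set (Fin n → ℂ)) (ψ : (Fin n → ℂ) → ℝ) (f : (Fin n → ℂ) → ℂ) : Prop :=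
  DifferentiableOn ℂ f Ω ∧ wnorm2 Ω ψ f < ⊤

/-- The diagonal of the Bergman kernel of `H(ψ)`:
`B_ψ(z) = sup {|f(z)|² : f ∈ H(ψ), ‖f‖_ψ ≤ 1}`. -/
def bergmanDiag (Ω : Set (Fin n → ℂ)) (ψ : (Fin n → ℂ) → ℝ) (z : Fin n → ℂ) : ℝ :=
  sSup {t : ℝ | ∃ f, DifferentiableOn ℂ f Ω ∧ wnorm2 Ω ψ f ≤ 1 ∧ t = ‖f z‖ ^ 2}

/-- Weighted inner product `⟨f,g⟩_ψ = ∫_Ω f ḡ e^{-ψ} dλ`. -/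
def wInner (Ω : Set (Fin n → ℂ)) (ψ : (Fin n → ℂ) → ℝ) (f g : (Fin n → ℂ) → ℂ) : ℂ :=
  ∫ z in Ω, f z * (starRingEnd ℂ) (g z) * Real.exp (-ψ z)

/-- Mixed determinants `D_j(A,B)`, defined so that
`det (s•A + r•B) = ∑_j (n choose j) s^j r^(n-j) D_j(A,B)`: explicitly `D_j(A,B)` is
`(n choose j)⁻¹` times the sum over all `j`-element subsets `S` of the row indices of the
determinant of the matrix whose rows are those of `A` on `S` and those of `B` elsewhere. -/
def mixedDet (A B : Matrix (Fin n) (Fin n) ℂ) (j : ℕ) : ℂ :=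
  ((n.choose j : ℂ))⁻¹ *
    ∑ S ∈ Finset.univ.powersetCard j,
      Matrix.det (Matrix.of fun i k => if i ∈ S then A i k else B i k)

/-!
On the ball of radius `δ / √k` about `z` the weight `kφ` differs by a bounded amount, uniformly in
`k` and in `z ∈ K`, from its first-order Taylor polynomial at `z`, whose linear part is the real
part of a complex-linear form `ℓ`. If `f` is a competitor for `B_{kφ}(z)`, then `f² exp (-ℓ(· - z))`
is holomorphic, so the mean value inequality bounds `|f(z)|² e^{-kφ(z)}` by a constant divided by
the volume of the ball, which is proportional to `k ^ (-n)`.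
-/

section TangentPlane

variable {E F : Type*} [NormedAddCommGroup E] [NormedSpace ℝ E]
  [NormedAddCommGroup F] [NormedSpace ℝ F]

lemma norm_sub_sub_fderiv_le_of_norm_fderiv_fderiv_le {f : E → F} {s : Set E} {C : ℝ}
    (hs : Convex ℝ s) (hf : ∀ x ∈ s, DifferentiableAt ℝ f x)
    (hf' : ∀ x ∈ s, DifferentiableAt ℝ (fderiv ℝ f) x)
    (hC : ∀ x ∈ s, ‖fderiv ℝ (fderiv ℝ f) x‖ ≤ C) {z w : E} (hz : z ∈ s) (hw : w ∈ s) :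
    ‖f w - f z - fderiv ℝ f z (w - z)‖ ≤ C * ‖w - z‖ ^ 2 := by
  have hseg : segment ℝ z w ⊆ s := hs.segment_subset hz hw
  have hC₀ : 0 ≤ C := (norm_nonneg (fderiv ℝ (fderiv ℝ f) z)).trans (hC z hz)
  have hfderiv : ∀ x ∈ segment ℝ z w, ‖fderiv ℝ f x - fderiv ℝ f z‖ ≤ C * ‖w - z‖ := by
    intro x hx
    calc ‖fderiv ℝ f x - fderiv ℝ f z‖
        ≤ C * ‖x - z‖ := hs.norm_image_sub_le_of_norm_fderiv_le hf' hC hz (hseg hx)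
      _ ≤ C * ‖w - z‖ := by gcongr; exact norm_sub_le_of_mem_segment hx
  calc ‖f w - f z - fderiv ℝ f z (w - z)‖
      ≤ C * ‖w - z‖ * ‖w - z‖ :=
        (convex_segment z w).norm_image_sub_le_of_norm_fderiv_le'
          (fun x hx => hf x (hseg hx)) hfderiv (left_mem_segment ℝ z w) (right_mem_segment ℝ z w)
    _ = C * ‖w - z‖ ^ 2 := by ring

lemma exists_norm_sub_sub_fderiv_le [ProperSpace E] {f : E → F} {K U : Set E}
    (hK : IsCompact K) (hU : IsOpen U) (hKU : K ⊆ U) (hf : ContDiffOn ℝ 2 f U) :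
    ∃ δ : ℝ, 0 < δ ∧ ∃ C : ℝ, 0 ≤ C ∧ ∀ z ∈ K, Metric.ball z δ ⊆ U ∧
      ∀ w ∈ Metric.ball z δ, ‖f w - f z - fderiv ℝ f z (w - z)‖ ≤ C * ‖w - z‖ ^ 2 := by
  obtain ⟨δ, hδ, hδU⟩ := hK.exists_cthickening_subset_open hU hKU
  have hf' : ContDiffOn ℝ 1 (fderiv ℝ f) U := hf.fderiv_of_isOpen hU (by norm_num)
  obtain ⟨C, hC⟩ := (hK.cthickening (r := δ)).exists_bound_of_continuousOn
    ((hf'.continuousOn_fderiv_of_isOpen hU le_rfl).mono hδU)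
  refine ⟨δ, hδ, max C 0, le_max_right C 0, fun z hz => ?_⟩
  have hball : Metric.ball z δ ⊆ Metric.cthickening δ K :=
    Metric.ball_subset_closedBall.trans (Metric.closedBall_subset_cthickening hz δ)
  have hnhds : ∀ x ∈ Metric.ball z δ, U ∈ 𝓝 x := fun x hx => hU.mem_nhds (hδU (hball hx))
  refine ⟨hball.trans hδU, fun w hw => ?_⟩
  exact norm_sub_sub_fderiv_le_of_norm_fderiv_fderiv_le (convex_ball z δ)
    (fun x hx => (hf.contDiffAt (hnhds x hx)).differentiableAt two_ne_zero)
    (fun x hx => (hf'.contDiffAt (hnhds x hx)).differentiableAt one_ne_zero)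
    (fun x hx => (hC x (hball hx)).trans (le_max_left C 0)) (Metric.mem_ball_self hδ) hw

lemma exists_mul_le_mul_add_fderiv_add [ProperSpace E] {φ : E → ℝ} {K U : Set E}
    (hK : IsCompact K) (hU : IsOpen U) (hKU : K ⊆ U) (hφ : ContDiffOn ℝ 2 φ U) :
    ∃ δ : ℝ, 0 < δ ∧ ∃ M : ℝ, ∀ z ∈ K, ∀ k : ℝ, 1 ≤ k → Metric.ball z (δ / √k) ⊆ U ∧
      ∀ w ∈ Metric.ball z (δ / √k), k * φ w ≤ k * φ z + (k • fderiv ℝ φ z) (w - z) + M := by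
  obtain ⟨δ, hδ, C, hC, htaylor⟩ := exists_norm_sub_sub_fderiv_le hK hU hKU hφ
  refine ⟨δ, hδ, C * δ ^ 2, fun z hz k hk => ?_⟩
  obtain ⟨hballU, hremainder⟩ := htaylor z hz
  have hk₀ : 0 < k := one_pos.trans_le hk
  have hball : Metric.ball z (δ / √k) ⊆ Metric.ball z δ :=
    Metric.ball_subset_ball (div_le_self hδ.le (Real.one_le_sqrt.2 hk))
  refine ⟨hball.trans hballU, fun w hw => ?_⟩
  have hscaled : k * (φ w - φ z - fderiv ℝ φ z (w - z)) ≤ C * δ ^ 2 := by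
    calc k * (φ w - φ z - fderiv ℝ φ z (w - z))
        ≤ k * (C * ‖w - z‖ ^ 2) := by
          gcongr
          exact (Real.le_norm_self _).trans (hremainder w (hball hw))
      _ ≤ k * (C * (δ / √k) ^ 2) := by
          gcongr
          exact (mem_ball_iff_norm.1 hw).le
      _ = C * δ ^ 2 := by
          rw [div_pow, Real.sq_sqrt hk₀.le]
          field_simp
  rw [smul_apply, smul_eq_mul]
  linarith

end TangentPlane

lemma measurePreserving_linearIsometryEquiv {E : Type*} [NormedAddCommGroup E] [NormedSpace ℝ E]
    [FiniteDimensional ℝ E] [MeasurableSpace E] [BorelSpace E] (μ : Measure E)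
    [μ.IsAddHaarMeasure] (e : E ≃ₗᵢ[ℝ] E) : MeasurePreserving e μ μ := by
  have hmap : (μ.map e).IsAddHaarMeasure := e.toContinuousLinearEquiv.isAddHaarMeasure_map μ
  let c : NNReal := Measure.addHaarScalarFactor (μ.map e) μ
  have hmap_eq : μ.map e = c • μ := Measure.isAddLeftInvariant_eq_smul (μ.map e) μ
  have hball : μ.map e (Metric.ball 0 1) = μ (Metric.ball 0 1) := by
    rw [Measure.map_apply e.continuous.measurable measurableSet_ball, e.preimage_ball, map_zero]
  have hc : c = 1 := by
    rw [hmap_eq, Measure.smul_apply, ENNReal.smul_def, smul_eq_mul] at hball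
    exact_mod_cast (ENNReal.mul_eq_right (Metric.measure_ball_pos μ 0 one_pos).ne'
      measure_ball_lt_top.ne).1 hball
  exact ⟨e.continuous.measurable, by rw [hmap_eq, hc, one_smul]⟩

section SubMeanValue

variable {E F : Type*} [NormedAddCommGroup E] [NormedSpace ℂ E]
  [NormedAddCommGroup F] [NormedSpace ℂ F] [CompleteSpace F]

lemma enorm_le_lintegral_circleMap {f : ℂ → F} {c : ℂ} {R : ℝ}
    (hf : DiffContOnCl ℂ f (Metric.ball c |R|)) :
    ENNReal.ofReal (2 * π) * ‖f c‖ₑ ≤ ∫⁻ θ in Set.Ioc 0 (2 * π), ‖f (circleMap c R θ)‖ₑ := by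
  have hmean : (2 * π) • f c = ∫ θ in Set.Ioc 0 (2 * π), f (circleMap c R θ) := by
    rw [← hf.circleAverage, Real.circleAverage_def,
      intervalIntegral.integral_of_le Real.two_pi_pos.le, smul_inv_smul₀ Real.two_pi_pos.ne']
  calc ENNReal.ofReal (2 * π) * ‖f c‖ₑ
      = ‖(2 * π) • f c‖ₑ := by rw [enorm_smul, Real.enorm_of_nonneg Real.two_pi_pos.le]
    _ ≤ ∫⁻ θ in Set.Ioc 0 (2 * π), ‖f (circleMap c R θ)‖ₑ := by
      rw [hmean]
      exact enorm_integral_le_lintegral_enorm _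

lemma enorm_le_lintegral_circleMap_smul {f : E → F} {z u : E} {r : ℝ}
    (hf : DifferentiableOn ℂ f (Metric.ball z r)) (hu : u ∈ Metric.ball 0 r) :
    ENNReal.ofReal (2 * π) * ‖f z‖ₑ ≤
      ∫⁻ θ in Set.Ioc 0 (2 * π), ‖f (z + circleMap 0 1 θ • u)‖ₑ := by
  have hmaps : Set.MapsTo (fun ζ : ℂ => z + ζ • u) (Metric.closedBall 0 1) (Metric.ball z r) := by
    intro ζ hζ
    rw [mem_closedBall_zero_iff] at hζ
    rw [mem_ball_zero_iff] at hu
    rw [Metric.mem_ball, dist_self_add_left, norm_smul]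
    exact (mul_le_of_le_one_left (norm_nonneg u) hζ).trans_lt hu
  have hdisc : DifferentiableOn ℂ (fun ζ : ℂ => f (z + ζ • u)) (Metric.closedBall 0 1) :=
    hf.comp (by fun_prop) hmaps
  have hdiff : DiffContOnCl ℂ (fun ζ : ℂ => f (z + ζ • u)) (Metric.ball 0 |1|) :=
    DifferentiableOn.diffContOnCl (by rwa [abs_one, closure_ball _ one_ne_zero])
  simpa using enorm_le_lintegral_circleMap hdiff

variable [FiniteDimensional ℂ E] [MeasurableSpace E] [BorelSpace E]
  (μ : Measure E) [μ.IsAddHaarMeasure]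

lemma lintegral_ball_comp_smul_of_norm_eq_one {c : ℂ} (hc : ‖c‖ = 1) (g : E → ℝ≥0∞) (r : ℝ) :
    ∫⁻ u in Metric.ball 0 r, g (c • u) ∂μ = ∫⁻ u in Metric.ball 0 r, g u ∂μ := by
  have hc₀ : c ≠ 0 := by
    rintro rfl
    simp at hc
  let e : E ≃ₗᵢ[ℝ] E :=
    ⟨(LinearEquiv.smulOfNeZero ℂ E c hc₀).restrictScalars ℝ, fun u => by simp [norm_smul, hc]⟩
  calc ∫⁻ u in Metric.ball 0 r, g (c • u) ∂μ
      = ∫⁻ u in e ⁻¹' Metric.ball 0 r, g (e u) ∂μ := by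
        rw [e.preimage_ball, map_zero]
        rfl
    _ = ∫⁻ u in Metric.ball 0 r, g u ∂μ :=
        (measurePreserving_linearIsometryEquiv μ e).setLIntegral_comp_preimage_emb
          e.toHomeomorph.measurableEmbedding g (Metric.ball 0 r)

lemma lintegral_lintegral_circleMap_smul {g : E → ℝ≥0∞} {r : ℝ}
    (hg : ContinuousOn g (Metric.ball 0 r)) :
    ∫⁻ u in Metric.ball 0 r, (∫⁻ θ in Set.Ioc 0 (2 * π), g (circleMap 0 1 θ • u)) ∂μ =
      ENNReal.ofReal (2 * π) * ∫⁻ u in Metric.ball 0 r, g u ∂μ := by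
  have : ProperSpace E := FiniteDimensional.proper ℂ E
  have hcont : ContinuousOn (fun p : E × ℝ => g (circleMap 0 1 p.2 • p.1))
      (Metric.ball 0 r ×ˢ Set.Ioc 0 (2 * π)) := by
    refine hg.comp (by fun_prop) fun p hp => ?_
    simpa [norm_smul] using hp.1
  have hmeas : AEMeasurable (fun p : E × ℝ => g (circleMap 0 1 p.2 • p.1))
      ((μ.restrict (Metric.ball 0 r)).prod (volume.restrict (Set.Ioc 0 (2 * π)))) := by
    rw [Measure.prod_restrict]
    exact hcont.aemeasurable (measurableSet_ball.prod measurableSet_Ioc)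
  rw [lintegral_lintegral_swap hmeas]
  calc ∫⁻ θ in Set.Ioc 0 (2 * π), ∫⁻ u in Metric.ball 0 r, g (circleMap 0 1 θ • u) ∂μ
      = ∫⁻ _ in Set.Ioc 0 (2 * π), ∫⁻ u in Metric.ball 0 r, g u ∂μ :=
        lintegral_congr fun θ => lintegral_ball_comp_smul_of_norm_eq_one μ (by simp) g r
    _ = ENNReal.ofReal (2 * π) * ∫⁻ u in Metric.ball 0 r, g u ∂μ := by
        rw [setLIntegral_const, Real.volume_Ioc, sub_zero, mul_comm]

theorem measure_ball_mul_enorm_le {f : E → F} {z : E} {r : ℝ}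
    (hf : DifferentiableOn ℂ f (Metric.ball z r)) :
    μ (Metric.ball z r) * ‖f z‖ₑ ≤ ∫⁻ w in Metric.ball z r, ‖f w‖ₑ ∂μ := by
  have hcont : ContinuousOn (fun u => ‖f (z + u)‖ₑ) (Metric.ball 0 r) :=
    (hf.continuousOn.comp (by fun_prop) fun u hu => by simpa using hu).enorm
  have htranslate : ∫⁻ u in Metric.ball 0 r, ‖f (z + u)‖ₑ ∂μ =
      ∫⁻ w in Metric.ball z r, ‖f w‖ₑ ∂μ := by
    have h := (measurePreserving_add_left μ z).setLIntegral_comp_preimage_emb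
      (measurableEmbedding_addLeft z) (fun w => ‖f w‖ₑ) (Metric.ball z r)
    rwa [preimage_add_ball, sub_self] at h
  have hπ : ENNReal.ofReal (2 * π) ≠ 0 := by simp [Real.pi_pos]
  rw [← htranslate, ← ENNReal.mul_le_mul_iff_right hπ ENNReal.ofReal_ne_top,
    ← lintegral_lintegral_circleMap_smul μ hcont]
  calc ENNReal.ofReal (2 * π) * (μ (Metric.ball z r) * ‖f z‖ₑ)
      = ∫⁻ _ in Metric.ball 0 r, ENNReal.ofReal (2 * π) * ‖f z‖ₑ ∂μ := by
        rw [setLIntegral_const, Measure.addHaar_ball_center μ z r]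
        ring
    _ ≤ ∫⁻ u in Metric.ball 0 r,
          (∫⁻ θ in Set.Ioc 0 (2 * π), ‖f (z + circleMap 0 1 θ • u)‖ₑ) ∂μ :=
        setLIntegral_mono' measurableSet_ball fun _ hu => enorm_le_lintegral_circleMap_smul hf hu

theorem measure_ball_mul_weighted_sq_norm_le {f : E → ℂ} {ψ : E → ℝ}
    {ℓ : E →L[ℝ] ℝ} {z : E} {r M : ℝ} (hf : DifferentiableOn ℂ f (Metric.ball z r))
    (hψ : ∀ w ∈ Metric.ball z r, ψ w ≤ ψ z + ℓ (w - z) + M) :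
    μ (Metric.ball z r) * ENNReal.ofReal (‖f z‖ ^ 2 * Real.exp (-ψ z)) ≤
      ENNReal.ofReal (Real.exp M) *
        ∫⁻ w in Metric.ball z r, ENNReal.ofReal (‖f w‖ ^ 2 * Real.exp (-ψ w)) ∂μ := by
  let L : E →L[ℂ] ℂ := StrongDual.extendRCLike ℓ
  let g : E → ℂ := fun w => f w ^ 2 * Complex.exp (-(ψ z + L (w - z)))
  have hg : DifferentiableOn ℂ g (Metric.ball z r) := by
    have hexp : Differentiable ℂ fun w => Complex.exp (-(ψ z + L (w - z))) := by fun_prop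
    exact (hf.pow 2).mul hexp.differentiableOn
  have hg_norm (w : E) : ‖g w‖ = ‖f w‖ ^ 2 * Real.exp (-(ψ z + ℓ (w - z))) := by
    have hre : (L (w - z)).re = ℓ (w - z) := StrongDual.re_extendRCLike_apply (𝕜 := ℂ) ℓ (w - z)
    simp only [g, norm_mul, norm_pow, Complex.norm_exp, neg_re, add_re, ofReal_re, hre]
  have hg_enorm (w : E) (hw : w ∈ Metric.ball z r) : ‖g w‖ₑ ≤
      ENNReal.ofReal (Real.exp M) * ENNReal.ofReal (‖f w‖ ^ 2 * Real.exp (-ψ w)) := by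
    rw [← ofReal_norm, hg_norm, ← ENNReal.ofReal_mul (Real.exp_nonneg M), mul_left_comm,
      ← Real.exp_add]
    gcongr
    linarith [hψ w hw]
  calc μ (Metric.ball z r) * ENNReal.ofReal (‖f z‖ ^ 2 * Real.exp (-ψ z))
      = μ (Metric.ball z r) * ‖g z‖ₑ := by
        rw [← ofReal_norm, hg_norm, sub_self, map_zero, add_zero]
    _ ≤ ∫⁻ w in Metric.ball z r, ‖g w‖ₑ ∂μ := measure_ball_mul_enorm_le μ hg
    _ ≤ ∫⁻ w in Metric.ball z r,
          ENNReal.ofReal (Real.exp M) * ENNReal.ofReal (‖f w‖ ^ 2 * Real.exp (-ψ w)) ∂μ :=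
        setLIntegral_mono' measurableSet_ball hg_enorm
    _ = _ := lintegral_const_mul' _ _ ENNReal.ofReal_ne_top

end SubMeanValue

theorem bergmanDiag_mul_exp_neg_le {Ω : Set (Fin n → ℂ)} {ψ : (Fin n → ℂ) → ℝ} {z : Fin n → ℂ}
    {r M : ℝ} {ℓ : (Fin n → ℂ) →L[ℝ] ℝ} (hr : 0 < r) (hball : Metric.ball z r ⊆ Ω)
    (hψ : ∀ w ∈ Metric.ball z r, ψ w ≤ ψ z + ℓ (w - z) + M) :
    bergmanDiag Ω ψ z * Real.exp (-ψ z) ≤ Real.exp M / volume.real (Metric.ball z r) := by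
  have hvol : 0 < volume.real (Metric.ball z r) :=
    ENNReal.toReal_pos (Metric.measure_ball_pos _ _ hr).ne' measure_ball_lt_top.ne
  rw [← le_div_iff₀ (Real.exp_pos _)]
  refine Real.sSup_le ?_ (by positivity)
  rintro _ ⟨f, hf, hf_norm, rfl⟩
  rw [le_div_iff₀ (Real.exp_pos _), le_div_iff₀' hvol,
    ← ENNReal.ofReal_le_ofReal_iff (Real.exp_nonneg M), ENNReal.ofReal_mul hvol.le,
    ofReal_measureReal]
  calc volume (Metric.ball z r) * ENNReal.ofReal (‖f z‖ ^ 2 * Real.exp (-ψ z))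
      ≤ ENNReal.ofReal (Real.exp M) *
          ∫⁻ w in Metric.ball z r, ENNReal.ofReal (‖f w‖ ^ 2 * Real.exp (-ψ w)) :=
        measure_ball_mul_weighted_sq_norm_le volume (hf.mono hball) hψ
    _ ≤ ENNReal.ofReal (Real.exp M) * 1 := by
        gcongr
        exact (lintegral_mono_set hball).trans hf_norm
    _ = ENNReal.ofReal (Real.exp M) := mul_one _

lemma volume_real_ball_pi_complex (z : Fin n → ℂ) {r : ℝ} (hr : 0 < r) :
    volume.real (Metric.ball z r) =
      (r ^ 2) ^ n * volume.real (Metric.ball (0 : Fin n → ℂ) 1) := by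
  rw [Measure.real, Measure.addHaar_ball_of_pos volume z hr, ENNReal.toReal_mul,
    ENNReal.toReal_ofReal (by positivity), ← pow_mul]
  simp [Module.finrank_pi_fintype, Measure.real, mul_comm 2 n]

theorem bergman_kernel_uniform_upper_bound_general
    {Ω : Set (Fin n → ℂ)} (hΩ : IsOpen Ω) {φ : (Fin n → ℂ) → ℝ} (hφ : ContDiffOn ℝ 2 φ Ω)
    {K : Set (Fin n → ℂ)} (hK : IsCompact K) (hKΩ : K ⊆ Ω) :
    ∃ C : ℝ, ∀ k : ℝ, 1 ≤ k → ∀ z ∈ K,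
      (k ^ n)⁻¹ * bergmanDiag Ω (fun w => k * φ w) z * Real.exp (-(k * φ z)) ≤ C := by
  obtain ⟨δ, hδ, M, hM⟩ := exists_mul_le_mul_add_fderiv_add hK hΩ hKΩ hφ
  let V : ℝ := volume.real (Metric.ball (0 : Fin n → ℂ) 1)
  refine ⟨Real.exp M / ((δ ^ 2) ^ n * V), fun k hk z hz => ?_⟩
  obtain ⟨hball, hweight⟩ := hM z hz k hk
  have hk₀ : 0 < k := one_pos.trans_le hk
  have hr : 0 < δ / √k := by positivity
  have hvol : volume.real (Metric.ball z (δ / √k)) = (δ ^ 2) ^ n / k ^ n * V := by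
    rw [volume_real_ball_pi_complex z hr, div_pow, Real.sq_sqrt hk₀.le, div_pow]
  calc (k ^ n)⁻¹ * bergmanDiag Ω (fun w => k * φ w) z * Real.exp (-(k * φ z))
      ≤ (k ^ n)⁻¹ * (Real.exp M / volume.real (Metric.ball z (δ / √k))) := by
        rw [mul_assoc]
        gcongr
        exact bergmanDiag_mul_exp_neg_le hr hball hweight
    _ = Real.exp M / ((δ ^ 2) ^ n * V) := by
        rw [hvol]
        field_simp

/-- For a bounded pseudoconvex domain `Ω ⊆ ℂⁿ` and `φ ∈ SPSH(Ω)`,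
for every compact `K ⊆ Ω` there is a constant `C_K` with
`k^{-n} B_{kφ}(z) e^{-kφ(z)} ≤ C_K` for all `k ≥ 1` and all `z ∈ K`. -/
theorem bergman_kernel_uniform_upper_bound
    (Ω : Set (Fin n → ℂ)) (hΩo : IsOpen Ω) (hΩconn : IsConnected Ω)
    (hΩb : Bornology.IsBounded Ω) (hΩp : Pseudoconvex Ω)
    (φ : (Fin n → ℂ) → ℝ) (hφ : SPSHOn Ω φ)
    (K : Set (Fin n → ℂ)) (hK : IsCompact K) (hKΩ : K ⊆ Ω) :
    ∃ C : ℝ, ∀ k : ℕ, 1 ≤ k → ∀ z ∈ K,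
      ((k : ℝ) ^ n)⁻¹ * bergmanDiag Ω (fun w => k * φ w) z * Real.exp (-(k * φ z)) ≤ C := by
  obtain ⟨C, hC⟩ :=
    bergman_kernel_uniform_upper_bound_general hΩo (hφ.1.of_le (by norm_cast)) hK hKΩ
  exact ⟨C, fun k hk => hC k (mod_cast hk)⟩
end
end

section
/- Let Ω ⊂ ℂⁿ be a bounded domain, φ : Ω → ℝ continuous, and u : Ω → ℝ continuous with compact support in Ω, so that H(φ) and H(φ+u) coincide as sets of holomorphic functions. Fix w ∈ Ω and suppose K_w ∈ H(φ) satisfies ⟨f, K_w⟩_φ = f(w) for all f ∈ H(φ), and K'_w ∈ H(φ+u) satisfies ⟨f, K'_w⟩_{φ+u} = f(w) for all f ∈ H(φ+u). Then T_{φ,e^{−u}} K'_w = K_w, i.e. P_φ(e^{−u}·K'_w) = K_w; equivalently, the inverse of the Toeplitz operator T_{φ,e^{−u}} maps the reproducing kernel of H(φ) at w to the reproducing kernel of H(φ+u) at w. -/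
open MeasureTheory Complex Filter
open scoped ENNReal Topology BigOperators Real ComplexOrder

noncomputable section

variable {n : ℕ}

/-!
Multiplication by `e^{-u}` moves the change of weight into the inner product:
`⟨e^{-u} g, f⟩_φ = ⟨g, f⟩_{φ+u}`. A lower bound on `u` makes every `f ∈ H(φ)` an element of
`H(φ+u)`, so testing `e^{-u} K'_w` and `K_w` against the same `f` gives `conj (f w)` both times, and
their difference is orthogonal to `H(φ)`.
-/

/-- The weighted Lebesgue space `L²(Ω, e^{-ψ} dλ)`, as a predicate on functions rather than on
almost everywhere classes. -/
def MemWeightedL2 (Ω : Set (Fin n → ℂ)) (ψ : (Fin n → ℂ) → ℝ) (f : (Fin n → ℂ) → ℂ) : Prop :=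
  AEStronglyMeasurable f (volume.restrict Ω) ∧ wnorm2 Ω ψ f < ⊤

/-- `K` is the Riesz representer in `H(ψ)` of the functional `L`; when `L` is evaluation at `w`,
this is the reproducing kernel of `H(ψ)` at `w`. Only the values of `L` on `H(ψ)` matter. -/
structure IsBergmanRepresenter (Ω : Set (Fin n → ℂ)) (ψ : (Fin n → ℂ) → ℝ)
    (L : ((Fin n → ℂ) → ℂ) → ℂ) (K : (Fin n → ℂ) → ℂ) : Prop where
  mem : MemBergman Ω ψ K
  wInner_eq : ∀ f, MemBergman Ω ψ f → wInner Ω ψ f K = L f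

/-- `h = P_ψ g`: the function `h` is the orthogonal projection to `H(ψ)` of
`g ∈ L²(e^{-ψ} dλ)`. Stated as a relation between `g` and `h`, it does not presuppose that `H(ψ)`
is complete. -/
structure IsBergmanProjection (Ω : Set (Fin n → ℂ)) (ψ : (Fin n → ℂ) → ℝ)
    (g h : (Fin n → ℂ) → ℂ) : Prop where
  memWeightedL2 : MemWeightedL2 Ω ψ g
  mem : MemBergman Ω ψ h
  orthogonal : ∀ f, MemBergman Ω ψ f → wInner Ω ψ (fun z => g z - h z) f = 0

section WeightedL2

variable {Ω : Set (Fin n → ℂ)} {φ ψ u : (Fin n → ℂ) → ℝ} {f g h : (Fin n → ℂ) → ℂ} {c : ℝ}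

theorem wInner_conj_symm (Ω : Set (Fin n → ℂ)) (ψ : (Fin n → ℂ) → ℝ) (f g : (Fin n → ℂ) → ℂ) :
    (starRingEnd ℂ) (wInner Ω ψ g f) = wInner Ω ψ f g := by
  simp only [wInner, ← integral_conj, map_mul, conj_conj, conj_ofReal, mul_comm (f _)]

theorem wInner_exp_neg_mul_left (Ω : Set (Fin n → ℂ)) (φ u : (Fin n → ℂ) → ℝ)
    (g f : (Fin n → ℂ) → ℂ) :
    wInner Ω φ (fun z => Real.exp (-u z) * g z) f = wInner Ω (φ + u) g f := by
  simp only [wInner, Pi.add_apply, neg_add, Real.exp_add, ofReal_mul]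
  congr with z
  ring

theorem wnorm2_exp_neg_mul (Ω : Set (Fin n → ℂ)) (φ u : (Fin n → ℂ) → ℝ) (g : (Fin n → ℂ) → ℂ) :
    wnorm2 Ω φ (fun z => Real.exp (-u z) * g z) = wnorm2 Ω (φ + u + u) g := by
  simp only [wnorm2, Pi.add_apply, neg_add, Real.exp_add, norm_mul, norm_real, Real.norm_eq_abs,
    Real.abs_exp]
  congr with z
  ring_nf

theorem wnorm2_add_le (φ : (Fin n → ℂ) → ℝ) (f : (Fin n → ℂ) → ℂ)
    (hu : ∀ᵐ z ∂volume.restrict Ω, c ≤ u z) :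
    wnorm2 Ω (φ + u) f ≤ ENNReal.ofReal (Real.exp (-c)) * wnorm2 Ω φ f := by
  rw [wnorm2, wnorm2, ← lintegral_const_mul' _ _ ENNReal.ofReal_ne_top]
  refine lintegral_mono_ae (hu.mono fun z hz => ?_)
  rw [← ENNReal.ofReal_mul (Real.exp_nonneg _)]
  refine ENNReal.ofReal_le_ofReal ?_
  calc ‖f z‖ ^ 2 * Real.exp (-(φ z + u z))
      = Real.exp (-u z) * (‖f z‖ ^ 2 * Real.exp (-φ z)) := by
        rw [neg_add, Real.exp_add]; ring
    _ ≤ Real.exp (-c) * (‖f z‖ ^ 2 * Real.exp (-φ z)) := by gcongr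

theorem wnorm2_add_lt_top (hu : ∀ᵐ z ∂volume.restrict Ω, c ≤ u z) (hf : wnorm2 Ω φ f < ⊤) :
    wnorm2 Ω (φ + u) f < ⊤ :=
  (wnorm2_add_le φ f hu).trans_lt (ENNReal.mul_lt_top ENNReal.ofReal_lt_top hf)

theorem MemBergman.add_weight (hf : MemBergman Ω φ f)
    (hu : ∀ᵐ z ∂volume.restrict Ω, c ≤ u z) : MemBergman Ω (φ + u) f :=
  ⟨hf.1, wnorm2_add_lt_top hu hf.2⟩

theorem MemBergman.memWeightedL2 (hf : MemBergman Ω ψ f) (hΩ : MeasurableSet Ω) :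
    MemWeightedL2 Ω ψ f :=
  ⟨hf.1.continuousOn.aestronglyMeasurable hΩ, hf.2⟩

theorem MemWeightedL2.exp_neg_mul (hg : MemWeightedL2 Ω (φ + u) g)
    (hu_meas : AEMeasurable u (volume.restrict Ω)) (hu : ∀ᵐ z ∂volume.restrict Ω, c ≤ u z) :
    MemWeightedL2 Ω φ (fun z => Real.exp (-u z) * g z) :=
  ⟨hu_meas.neg.exp.complex_ofReal.aestronglyMeasurable.mul hg.1,
    (wnorm2_exp_neg_mul Ω φ u g).trans_lt (wnorm2_add_lt_top hu hg.2)⟩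

theorem MemWeightedL2.memLp_two (hf : MemWeightedL2 Ω ψ f)
    (hψ : AEMeasurable ψ (volume.restrict Ω)) :
    MemLp (fun z => f z * Real.exp (-ψ z / 2)) 2 (volume.restrict Ω) := by
  have hmeas : AEStronglyMeasurable (fun z => f z * Real.exp (-ψ z / 2)) (volume.restrict Ω) :=
    hf.1.mul (hψ.neg.div_const 2).exp.complex_ofReal.aestronglyMeasurable
  have norm_sq (z) : ‖f z * Real.exp (-ψ z / 2)‖ ^ 2 = ‖f z‖ ^ 2 * Real.exp (-ψ z) := by
    rw [norm_mul, norm_real, Real.norm_eq_abs, Real.abs_exp, mul_pow, ← Real.exp_nat_mul,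
      Nat.cast_ofNat, mul_div_cancel₀ _ two_ne_zero]
  rw [memLp_two_iff_integrable_sq_norm hmeas]
  refine ⟨hmeas.norm.pow 2, ?_⟩
  rw [hasFiniteIntegral_iff_ofReal (.of_forall fun z => by positivity)]
  simpa only [norm_sq, wnorm2] using hf.2

theorem MemWeightedL2.integrable_mul_conj (hf : MemWeightedL2 Ω ψ f) (hg : MemWeightedL2 Ω ψ g)
    (hψ : AEMeasurable ψ (volume.restrict Ω)) :
    IntegrableOn (fun z => f z * (starRingEnd ℂ) (g z) * Real.exp (-ψ z)) Ω := by
  refine ((hf.memLp_two hψ).integrable_mul (hg.memLp_two hψ).star).congr (.of_forall fun z => ?_)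
  have exp_half_mul : (Real.exp (-ψ z / 2) : ℂ) * Real.exp (-ψ z / 2) = Real.exp (-ψ z) := by
    rw [← ofReal_mul, ← Real.exp_add, add_halves]
  simp only [Pi.mul_apply, Pi.star_apply, RCLike.star_def, map_mul, conj_ofReal, ← exp_half_mul]
  ring

theorem wInner_sub_left (hf : MemWeightedL2 Ω ψ f) (hg : MemWeightedL2 Ω ψ g)
    (hh : MemWeightedL2 Ω ψ h) (hψ : AEMeasurable ψ (volume.restrict Ω)) :
    wInner Ω ψ (fun z => f z - g z) h = wInner Ω ψ f h - wInner Ω ψ g h := by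
  simp only [wInner, sub_mul]
  exact integral_sub (hf.integrable_mul_conj hh hψ) (hg.integrable_mul_conj hh hψ)

end WeightedL2

theorem toeplitz_maps_kernel_to_kernel_general
    {Ω : Set (Fin n → ℂ)} (hΩ : MeasurableSet Ω) {φ u : (Fin n → ℂ) → ℝ}
    (hφ : AEMeasurable φ (volume.restrict Ω)) (hu_meas : AEMeasurable u (volume.restrict Ω))
    {c : ℝ} (hu : ∀ᵐ z ∂volume.restrict Ω, c ≤ u z)
    {L : ((Fin n → ℂ) → ℂ) → ℂ} {K K' : (Fin n → ℂ) → ℂ}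
    (hK : IsBergmanRepresenter Ω φ L K) (hK' : IsBergmanRepresenter Ω (φ + u) L K') :
    IsBergmanProjection Ω φ (fun z => Real.exp (-u z) * K' z) K := by
  have hK'φ : MemWeightedL2 Ω φ (fun z => Real.exp (-u z) * K' z) :=
    (hK'.mem.memWeightedL2 hΩ).exp_neg_mul hu_meas hu
  refine ⟨hK'φ, hK.mem, fun f hf => ?_⟩
  calc wInner Ω φ (fun z => Real.exp (-u z) * K' z - K z) f
      = wInner Ω φ (fun z => Real.exp (-u z) * K' z) f - wInner Ω φ K f :=
        wInner_sub_left hK'φ (hK.mem.memWeightedL2 hΩ) (hf.memWeightedL2 hΩ) hφ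
    _ = wInner Ω (φ + u) K' f - wInner Ω φ K f := by rw [wInner_exp_neg_mul_left]
    _ = (starRingEnd ℂ) (L f) - (starRingEnd ℂ) (L f) := by
        rw [← wInner_conj_symm, hK'.wInner_eq f (hf.add_weight hu), ← wInner_conj_symm,
          hK.wInner_eq f hf]
    _ = 0 := sub_self _

/-- Let `K_w` be the reproducing kernel of `H(φ)` at `w` and `K'_w` that of
`H(φ+u)` at `w`, where `u` is continuous with compact support in `Ω`.  Then
`T_{φ,e^{-u}} K'_w = P_φ(e^{-u} K'_w) = K_w`; since `K_w ∈ H(φ)`, this is encoded by the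
orthogonality of `e^{-u} K'_w - K_w` to every `f ∈ H(φ)`. -/
theorem toeplitz_maps_kernel_to_kernel
    (Ω : Set (Fin n → ℂ)) (hΩo : IsOpen Ω) (hΩconn : IsConnected Ω)
    (hΩb : Bornology.IsBounded Ω)
    (φ : (Fin n → ℂ) → ℝ) (hφ : ContinuousOn φ Ω)
    (u : (Fin n → ℂ) → ℝ) (hu : Continuous u) (huc : HasCompactSupport u)
    (hus : tsupport u ⊆ Ω)
    (w : Fin n → ℂ) (hw : w ∈ Ω)
    (Kw K'w : (Fin n → ℂ) → ℂ)
    (hKw : MemBergman Ω φ Kw)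
    (hKwrep : ∀ f, MemBergman Ω φ f → wInner Ω φ f Kw = f w)
    (hK'w : MemBergman Ω (fun z => φ z + u z) K'w)
    (hK'wrep : ∀ f, MemBergman Ω (fun z => φ z + u z) f →
      wInner Ω (fun z => φ z + u z) f K'w = f w) :
    ∀ f, MemBergman Ω φ f →
      ∫ z in Ω, (Real.exp (-u z) * K'w z - Kw z) * (starRingEnd ℂ) (f z) *
        Real.exp (-φ z) = 0 := by
  obtain ⟨C, hC⟩ := hu.bounded_above_of_compact_support huc
  have hu_lower : ∀ z, -C ≤ u z := fun z => neg_le_of_abs_le (hC z)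
  exact (toeplitz_maps_kernel_to_kernel_general (L := fun f => f w) hΩo.measurableSet
    (hφ.aemeasurable hΩo.measurableSet) hu.aemeasurable (.of_forall hu_lower)
    ⟨hKw, hKwrep⟩ ⟨hK'w, hK'wrep⟩).orthogonal
end
end

section
/- Let Ω ⊂ ℂⁿ be a bounded pseudoconvex domain, φ ∈ SPSH(Ω) and u a φ-admissible test function. Define e : [0,1] → ℝ by e(t) := (π^{−n}/(n+1)) Σ_{j=0}^n ∫_Ω t·u(z)·D_j(H_{φ+tu}(z), H_φ(z)) dλ(z) (the Monge–Ampère energy E(φ+tu)). Then e is differentiable on [0,1] and e'(t) = π^{−n} ∫_Ω u(z) det H_{φ+tu}(z) dλ(z) for every t ∈ [0,1], i.e. the energy functional is a primitive of the normalized Monge–Ampère operator (1/n!)(dd^c(φ+tu))^n. -/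
open MeasureTheory Complex Filter
open scoped ENNReal Topology BigOperators Real ComplexOrder

noncomputable section

variable {n : ℕ}

/-!
Since `x A + (1 - x) B` has determinant `∑ⱼ (n choose j) xʲ (1 - x)ⁿ⁻ʲ Dⱼ(A, B)` and every
Bernstein polynomial of degree `n` has integral `1 / (n + 1)` over `[0, 1]`, the mean of the mixed
determinants is `∫₀¹ det (x A + (1 - x) B) dx`. The complex Hessian being linear, this makes the
energy of `φ + v` relative to `φ` equal to `π⁻ⁿ ∫_Ω ∫₀¹ v det H_{φ + x v} dx dλ`. For `v = t u` the
inner integral is `∫₀ᵗ u det H_{φ + s u} ds`; as `u` has compact support in `Ω`, the integrals may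
be exchanged, and the claim becomes the fundamental theorem of calculus.
-/

section MixedDeterminants

lemma det_smul_add_smul {ι R : Type*} [Fintype ι] [DecidableEq ι] [CommRing R]
    (A B : Matrix ι ι R) (s r : R) :
    (s • A + r • B).det = ∑ S : Finset ι, s ^ S.card * r ^ (Fintype.card ι - S.card) *
      (Matrix.of fun i k => if i ∈ S then A i k else B i k).det := by
  refine (Matrix.detRowAlternating.map_add_univ (s • A) (r • B)).trans
    (Finset.sum_congr rfl fun S _ => ?_)
  have scaled_rows : S.piecewise (s • A) (r • B) = Matrix.of fun i k =>
      (if i ∈ S then s else r) * (Matrix.of fun i k => if i ∈ S then A i k else B i k) i k := by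
    ext i k
    by_cases hi : i ∈ S <;> simp [hi, Finset.piecewise]
  have prod_scalars : ∏ i, (if i ∈ S then s else r) =
      s ^ S.card * r ^ (Fintype.card ι - S.card) := by
    simp [Finset.prod_ite, Finset.filter_not, Finset.card_univ_sdiff]
  rw [scaled_rows, ← prod_scalars]
  exact Matrix.det_mul_column _ _

lemma det_smul_add_smul_eq_sum_mixedDet (A B : Matrix (Fin n) (Fin n) ℂ) (s r : ℂ) :
    (s • A + r • B).det =
      ∑ j ∈ Finset.range (n + 1), n.choose j * s ^ j * r ^ (n - j) * mixedDet A B j := by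
  rw [det_smul_add_smul, ← Finset.powerset_univ, Finset.sum_powerset, Finset.card_fin]
  refine Finset.sum_congr rfl fun j hj => ?_
  have choose_ne_zero : (n.choose j : ℂ) ≠ 0 :=
    mod_cast (Nat.choose_pos (Finset.mem_range_succ_iff.mp hj)).ne'
  rw [mixedDet, Finset.mul_sum, Finset.mul_sum]
  refine Finset.sum_congr rfl fun S hS => ?_
  rw [(Finset.mem_powersetCard.mp hS).2, Fintype.card_fin]
  field_simp

lemma integral_pow_mul_one_sub_pow (j k : ℕ) :
    ∫ x in (0 : ℝ)..1, (x : ℂ) ^ j * (1 - x) ^ k =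
      (j.factorial * k.factorial : ℂ) / (j + k + 1).factorial := by
  have beta := betaIntegral_eq_Gamma_mul_div (j + 1) (k + 1)
    (by norm_cast; positivity) (by norm_cast; positivity)
  have gamma_add : Gamma (j + 1 + (k + 1)) = (j + k + 1).factorial := by
    rw [← Gamma_nat_eq_factorial]
    push_cast
    ring_nf
  simpa only [betaIntegral, add_sub_cancel_right, cpow_natCast, Gamma_nat_eq_factorial,
    gamma_add] using beta

lemma integral_choose_mul_pow_mul_one_sub_pow {j : ℕ} (hj : j ≤ n) :
    ∫ x in (0 : ℝ)..1, (n.choose j : ℂ) * x ^ j * (1 - x) ^ (n - j) = (n + 1 : ℂ)⁻¹ := by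
  simp_rw [mul_assoc]
  rw [intervalIntegral.integral_const_mul, integral_pow_mul_one_sub_pow,
    Nat.add_sub_cancel' hj, Nat.factorial_succ, ← Nat.choose_mul_factorial_mul_factorial hj]
  have := Nat.choose_pos hj
  push_cast
  field_simp

lemma integral_det_convex_combination (A B : Matrix (Fin n) (Fin n) ℂ) :
    ∫ x in (0 : ℝ)..1, ((x : ℂ) • A + (1 - x : ℂ) • B).det =
      (n + 1 : ℂ)⁻¹ * ∑ j ∈ Finset.range (n + 1), mixedDet A B j := by
  simp_rw [det_smul_add_smul_eq_sum_mixedDet]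
  rw [intervalIntegral.integral_finsetSum fun j _ => Continuous.intervalIntegrable (by fun_prop) ..,
    Finset.mul_sum]
  refine Finset.sum_congr rfl fun j hj => ?_
  rw [intervalIntegral.integral_mul_const,
    integral_choose_mul_pow_mul_one_sub_pow (Finset.mem_range_succ_iff.mp hj)]

lemma continuousOn_mixedDet {X : Type*} [TopologicalSpace X] {s : Set X}
    {A B : X → Matrix (Fin n) (Fin n) ℂ} (hA : ContinuousOn A s) (hB : ContinuousOn B s) (j : ℕ) :
    ContinuousOn (fun x => mixedDet (A x) (B x) j) s := by
  refine continuousOn_const.mul (continuousOn_finsetSum _ fun S _ =>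
    (Continuous.matrix_det continuous_id).comp_continuousOn ?_)
  refine continuousOn_pi.2 fun i => continuousOn_pi.2 fun k => ?_
  by_cases hi : i ∈ S
  · simpa only [Matrix.of_apply, if_pos hi] using continuousOn_pi.1 (continuousOn_pi.1 hA i) k
  · simpa only [Matrix.of_apply, if_neg hi] using continuousOn_pi.1 (continuousOn_pi.1 hB i) k

end MixedDeterminants

section ComplexHessian

variable {Ω : Set (Fin n → ℂ)} {f g : (Fin n → ℂ) → ℂ} {z : Fin n → ℂ}

lemma wDeriv_add_const_mul (hf : DifferentiableAt ℝ f z) (hg : DifferentiableAt ℝ g z) (c : ℂ)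
    (j : Fin n) : wDeriv (fun w => f w + c * g w) j z = wDeriv f j z + c * wDeriv g j z := by
  simp only [wDeriv, fderiv_fun_add hf (hg.const_mul c), fderiv_const_mul hg, add_apply,
    smul_apply, smul_eq_mul]
  ring

lemma wDerivBar_add_const_mul (hf : DifferentiableAt ℝ f z) (hg : DifferentiableAt ℝ g z) (c : ℂ)
    (j : Fin n) :
    wDerivBar (fun w => f w + c * g w) j z = wDerivBar f j z + c * wDerivBar g j z := by
  simp only [wDerivBar, fderiv_fun_add hf (hg.const_mul c), fderiv_const_mul hg, add_apply,
    smul_apply, smul_eq_mul]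
  ring

lemma wDerivBar_congr_of_eventuallyEq (h : f =ᶠ[𝓝 z] g) (j : Fin n) :
    wDerivBar f j z = wDerivBar g j z := by
  simp only [wDerivBar, h.fderiv_eq]

lemma contDiffOn_wDeriv {m k : WithTop ℕ∞} (hΩ : IsOpen Ω) (hf : ContDiffOn ℝ m f Ω)
    (hkm : k + 1 ≤ m) (j : Fin n) : ContDiffOn ℝ k (wDeriv f j) Ω := by
  have := hf.fderiv_of_isOpen hΩ hkm
  unfold wDeriv
  fun_prop

lemma contDiffOn_wDerivBar {m k : WithTop ℕ∞} (hΩ : IsOpen Ω) (hf : ContDiffOn ℝ m f Ω)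
    (hkm : k + 1 ≤ m) (j : Fin n) : ContDiffOn ℝ k (wDerivBar f j) Ω := by
  have := hf.fderiv_of_isOpen hΩ hkm
  unfold wDerivBar
  fun_prop

variable {φ v : (Fin n → ℂ) → ℝ}

lemma continuousOn_cHessian (hΩ : IsOpen Ω) (hφ : ContDiffOn ℝ 2 φ Ω) :
    ContinuousOn (cHessian φ) Ω := by
  have hφ' : ContDiffOn ℝ 2 (fun w => (φ w : ℂ)) Ω := ofRealCLM.contDiff.comp_contDiffOn hφ
  refine continuousOn_pi.2 fun j => continuousOn_pi.2 fun k => ?_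
  have hφj : ContDiffOn ℝ 1 (wDeriv (fun w => (φ w : ℂ)) j) Ω :=
    contDiffOn_wDeriv hΩ hφ' (by norm_num) j
  exact (contDiffOn_wDerivBar (k := 0) hΩ hφj (by norm_num) k).continuousOn

lemma cHessian_add_const_mul (hΩ : IsOpen Ω) (hφ : ContDiffOn ℝ 2 φ Ω) (hv : ContDiffOn ℝ 2 v Ω)
    (hz : z ∈ Ω) (s : ℝ) :
    cHessian (fun w => φ w + s * v w) z = cHessian φ z + (s : ℂ) • cHessian v z := by
  have hφ' : ContDiffOn ℝ 2 (fun w => (φ w : ℂ)) Ω := ofRealCLM.contDiff.comp_contDiffOn hφ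
  have hv' : ContDiffOn ℝ 2 (fun w => (v w : ℂ)) Ω := ofRealCLM.contDiff.comp_contDiffOn hv
  have differentiableAt {h : (Fin n → ℂ) → ℂ} (hh : ContDiffOn ℝ 1 h Ω) {w} (hw : w ∈ Ω) :
      DifferentiableAt ℝ h w :=
    (hh.differentiableOn one_ne_zero).differentiableAt (hΩ.mem_nhds hw)
  ext j k
  have wDeriv_near : (fun w => wDeriv (fun y => ((φ y + s * v y : ℝ) : ℂ)) j w) =ᶠ[𝓝 z]
      fun w => wDeriv (fun y => (φ y : ℂ)) j w + s * wDeriv (fun y => (v y : ℂ)) j w := by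
    filter_upwards [hΩ.mem_nhds hz] with w hw
    simpa only [ofReal_add, ofReal_mul] using wDeriv_add_const_mul
      (differentiableAt (hφ'.of_le one_le_two) hw) (differentiableAt (hv'.of_le one_le_two) hw) s j
  exact (wDerivBar_congr_of_eventuallyEq wDeriv_near k).trans (wDerivBar_add_const_mul
    (differentiableAt (contDiffOn_wDeriv hΩ hφ' (by norm_num) j) hz)
    (differentiableAt (contDiffOn_wDeriv hΩ hv' (by norm_num) j) hz) s k)

lemma cHessian_convex_combination (hΩ : IsOpen Ω) (hφ : ContDiffOn ℝ 2 φ Ω)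
    (hv : ContDiffOn ℝ 2 v Ω) (hz : z ∈ Ω) (x : ℝ) :
    (x : ℂ) • cHessian (fun w => φ w + v w) z + (1 - x : ℂ) • cHessian φ z =
      cHessian (fun w => φ w + x * v w) z := by
  have hadd := cHessian_add_const_mul hΩ hφ hv hz 1
  simp only [one_mul, ofReal_one, one_smul] at hadd
  rw [hadd, cHessian_add_const_mul hΩ hφ hv hz]
  module

end ComplexHessian

section CompactlySupportedIntegrands

variable {X : Type*} [TopologicalSpace X]

lemma continuous_mul_of_tsupport_subset {R : Type*} [TopologicalSpace R] [MulZeroClass R]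
    [ContinuousMul R] {u g : X → R} {Ω : Set X} (hu : Continuous u) (hus : tsupport u ⊆ Ω)
    (hΩ : IsOpen Ω) (hg : ContinuousOn g Ω) : Continuous fun x => u x * g x :=
  (hu.continuousOn.mul hg).continuous_of_tsupport_subset hΩ
    (tsupport_mul_subset_left.trans hus)

lemma integrable_mul_of_tsupport_subset {R : Type*} [NonUnitalNormedRing R] [MeasurableSpace X]
    [OpensMeasurableSpace X] {μ : Measure X} [IsFiniteMeasureOnCompacts μ] {u g : X → R} {Ω : Set X}
    (hu : Continuous u) (huc : HasCompactSupport u) (hus : tsupport u ⊆ Ω) (hΩ : IsOpen Ω)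
    (hg : ContinuousOn g Ω) : Integrable (fun x => u x * g x) μ :=
  (continuous_mul_of_tsupport_subset hu hus hΩ hg).integrable_of_hasCompactSupport huc.mul_right

lemma hasDerivAt_integral_intervalIntegral {E : Type*} [NormedAddCommGroup E] [NormedSpace ℝ E]
    [CompleteSpace E] [T2Space X] [SecondCountableTopology X] [MeasurableSpace X] [BorelSpace X]
    {μ : Measure X} [IsFiniteMeasureOnCompacts μ] [SFinite μ] {F : ℝ → X → E}
    (hF : Continuous F.uncurry) {K : Set X} (hK : IsCompact K) (hFK : ∀ s, ∀ x ∉ K, F s x = 0)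
    (a t : ℝ) :
    HasDerivAt (fun t => ∫ x, (∫ s in a..t, F s x) ∂μ) (∫ x, F t x ∂μ) t := by
  have swap (t : ℝ) : ∫ x, (∫ s in a..t, F s x) ∂μ = ∫ s in a..t, ∫ x, F s x ∂μ := by
    refine (intervalIntegral_integral_swap ?_).symm
    rw [← Measure.restrict_univ (μ := μ), Measure.prod_restrict]
    have integrableOn_box : IntegrableOn F.uncurry (Set.uIcc a t ×ˢ K) (volume.prod μ) :=
      hF.continuousOn.integrableOn_compact (isCompact_uIcc.prod hK)
    exact integrableOn_box.of_forall_sdiff_eq_zero (measurableSet_uIoc.prod .univ) fun p hp =>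
      hFK _ _ fun hpK => hp.2 ⟨Set.uIoc_subset_uIcc hp.1.1, hpK⟩
  have continuous_integral : Continuous fun s => ∫ x, F s x ∂μ :=
    continuousOn_univ.mp <| continuousOn_integral_of_compact_support hK hF.continuousOn
      fun s x _ hx => hFK s x hx
  simp_rw [swap]
  exact (continuous_integral.integral_hasStrictDerivAt a t).hasDerivAt

end CompactlySupportedIntegrands

section Energy

variable {Ω : Set (Fin n → ℂ)} {φ u v : (Fin n → ℂ) → ℝ}

/-- The Monge–Ampère energy `E(φ + v)` relative to the base point `φ`. It is parametrized by the
difference `v`, which carries the compact support. Mixed determinants of Hermitian matrices are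
real, so taking real parts loses nothing. -/
def mongeAmpereEnergy (Ω : Set (Fin n → ℂ)) (φ v : (Fin n → ℂ) → ℝ) : ℝ :=
  ((π : ℝ) ^ n)⁻¹ / (n + 1) * ∑ j ∈ Finset.range (n + 1),
    ∫ z in Ω, v z * (mixedDet (cHessian (fun w => φ w + v w) z) (cHessian φ z) j).re

lemma sum_re_mixedDet_cHessian (hΩ : IsOpen Ω) (hφ : ContDiffOn ℝ 2 φ Ω)
    (hv : ContDiffOn ℝ 2 v Ω) {z : Fin n → ℂ} (hz : z ∈ Ω) :
    ∑ j ∈ Finset.range (n + 1),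
        (mixedDet (cHessian (fun w => φ w + v w) z) (cHessian φ z) j).re =
      (n + 1) * ∫ x in (0 : ℝ)..1, (cHessian (fun w => φ w + x * v w) z).det.re := by
  have continuous_det : Continuous fun x : ℝ => ((x : ℂ) • cHessian (fun w => φ w + v w) z +
      (1 - x : ℂ) • cHessian φ z).det := Continuous.matrix_det (by fun_prop)
  have hmean := congrArg re (integral_det_convex_combination (cHessian (fun w => φ w + v w) z)
    (cHessian φ z))
  rw [← reCLM_apply, ← reCLM.intervalIntegral_comp_comm (continuous_det.intervalIntegrable ..)]
    at hmean
  simp only [cHessian_convex_combination hΩ hφ hv hz, reCLM_apply] at hmean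
  rw [hmean, ← ofReal_natCast, ← ofReal_one, ← ofReal_add, ← ofReal_inv, re_ofReal_mul, re_sum]
  field_simp

lemma mongeAmpereEnergy_eq (hΩ : IsOpen Ω) (hφ : ContDiffOn ℝ 2 φ Ω)
    (hv : ContDiff ℝ 2 v) (hvc : HasCompactSupport v) (hvs : tsupport v ⊆ Ω) :
    mongeAmpereEnergy Ω φ v = ((π : ℝ) ^ n)⁻¹ *
      ∫ z in Ω, ∫ x in (0 : ℝ)..1, v z * (cHessian (fun w => φ w + x * v w) z).det.re := by
  have integrable_term (j : ℕ) : IntegrableOn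
      (fun z => v z * (mixedDet (cHessian (fun w => φ w + v w) z) (cHessian φ z) j).re) Ω := by
    have hφv : ContDiffOn ℝ 2 (fun w => φ w + v w) Ω := hφ.add hv.contDiffOn
    exact integrable_mul_of_tsupport_subset hv.continuous hvc hvs hΩ <|
      continuous_re.comp_continuousOn <|
        continuousOn_mixedDet (continuousOn_cHessian hΩ hφv) (continuousOn_cHessian hΩ hφ) j
  have sum_integrand {z : Fin n → ℂ} (hz : z ∈ Ω) :
      ∑ j ∈ Finset.range (n + 1),
          v z * (mixedDet (cHessian (fun w => φ w + v w) z) (cHessian φ z) j).re =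
        (n + 1) * ∫ x in (0 : ℝ)..1, v z * (cHessian (fun w => φ w + x * v w) z).det.re := by
    rw [← Finset.mul_sum, sum_re_mixedDet_cHessian hΩ hφ hv.contDiffOn hz,
      intervalIntegral.integral_const_mul, mul_left_comm]
  rw [mongeAmpereEnergy, ← integral_finsetSum _ fun j _ => integrable_term j,
    setIntegral_congr_fun hΩ.measurableSet fun z => sum_integrand, integral_const_mul]
  field_simp

lemma continuous_mul_det_cHessian (hΩ : IsOpen Ω) (hφ : ContDiffOn ℝ 2 φ Ω)
    (hu : ContDiff ℝ 2 u) (hus : tsupport u ⊆ Ω) :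
    Continuous fun p : ℝ × (Fin n → ℂ) =>
      u p.2 * (cHessian (fun w => φ w + p.1 * u w) p.2).det.re := by
  have hH : ContinuousOn (fun p : ℝ × (Fin n → ℂ) =>
      cHessian φ p.2 + (p.1 : ℂ) • cHessian u p.2) (Set.univ ×ˢ Ω) := by
    have hmaps : Set.MapsTo Prod.snd ((Set.univ : Set ℝ) ×ˢ Ω) Ω := fun _ hp => hp.2
    have hHφ := (continuousOn_cHessian hΩ hφ).comp continuousOn_snd hmaps
    have hHu := (continuousOn_cHessian hΩ hu.contDiffOn).comp continuousOn_snd hmaps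
    exact hHφ.add ((continuous_ofReal.comp continuous_fst).continuousOn.smul hHu)
  have hdet : ContinuousOn (fun p : ℝ × (Fin n → ℂ) =>
      (cHessian (fun w => φ w + p.1 * u w) p.2).det.re) (Set.univ ×ˢ Ω) :=
    ((continuous_re.comp (Continuous.matrix_det continuous_id)).comp_continuousOn hH).congr
      fun p hp => by
        rw [cHessian_add_const_mul hΩ hφ hu.contDiffOn hp.2]
        rfl
  exact continuous_mul_of_tsupport_subset (hu.continuous.comp continuous_snd)
    (fun _ hp =>
      Set.mk_mem_prod (Set.mem_univ _) (hus (tsupport_comp_subset_preimage u continuous_snd hp)))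
    (isOpen_univ.prod hΩ) hdet

lemma mongeAmpereEnergy_const_mul (hΩ : IsOpen Ω) (hφ : ContDiffOn ℝ 2 φ Ω)
    (hu : ContDiff ℝ 2 u) (huc : HasCompactSupport u) (hus : tsupport u ⊆ Ω) (t : ℝ) :
    mongeAmpereEnergy Ω φ (fun z => t * u z) = ((π : ℝ) ^ n)⁻¹ *
      ∫ z in Ω, ∫ s in (0 : ℝ)..t, u z * (cHessian (fun w => φ w + s * u w) z).det.re := by
  have rescale (z : Fin n → ℂ) :
      ∫ x in (0 : ℝ)..1, t * u z * (cHessian (fun w => φ w + x * (t * u w)) z).det.re =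
        ∫ s in (0 : ℝ)..t, u z * (cHessian (fun w => φ w + s * u w) z).det.re := by
    have hsubst := intervalIntegral.smul_integral_comp_mul_left (a := 0) (b := 1)
      (fun s => u z * (cHessian (fun w => φ w + s * u w) z).det.re) t
    rw [mul_zero, mul_one, smul_eq_mul, ← intervalIntegral.integral_const_mul] at hsubst
    simp only [← hsubst, mul_assoc, mul_left_comm]
  rw [mongeAmpereEnergy_eq hΩ hφ (contDiff_const.mul hu) huc.mul_left
    (tsupport_mul_subset_right.trans hus)]
  simp_rw [rescale]

theorem energy_derivative_general (hΩ : IsOpen Ω) (hφ : ContDiffOn ℝ 2 φ Ω) (hu : ContDiff ℝ 2 u)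
    (huc : HasCompactSupport u) (hus : tsupport u ⊆ Ω) (t : ℝ) :
    HasDerivAt (fun s : ℝ => mongeAmpereEnergy Ω φ fun z => s * u z)
      (((π : ℝ) ^ n)⁻¹ * ∫ z in Ω, u z * (cHessian (fun w => φ w + t * u w) z).det.re) t := by
  simp_rw [mongeAmpereEnergy_const_mul hΩ hφ hu huc hus]
  have vanishes_off_tsupport (s : ℝ) (z : Fin n → ℂ) (hz : z ∉ tsupport u) :
      u z * (cHessian (fun w => φ w + s * u w) z).det.re = 0 := by
    rw [image_eq_zero_of_notMem_tsupport hz, zero_mul]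
  exact (hasDerivAt_integral_intervalIntegral (continuous_mul_det_cHessian hΩ hφ hu hus) huc
    vanishes_off_tsupport 0 t).const_mul _

end Energy

/-- The Monge–Ampère energy `e(t) = E(φ + t u)` (written via mixed
determinants of complex Hessians) is differentiable on `[0,1]` with
`e'(t) = π^{-n} ∫_Ω u det H_{φ+tu} dλ`, i.e. the energy is a primitive of the normalized
Monge–Ampère operator `(1/n!)(dd^c(φ+tu))^n`. -/
theorem energy_derivative
    (Ω : Set (Fin n → ℂ)) (hΩo : IsOpen Ω) (hΩconn : IsConnected Ω)
    (hΩb : Bornology.IsBounded Ω) (hΩp : Pseudoconvex Ω)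
    (φ : (Fin n → ℂ) → ℝ) (hφ : SPSHOn Ω φ)
    (u : (Fin n → ℂ) → ℝ) (hu : ContDiff ℝ (⊤ : ℕ∞) u) (huc : HasCompactSupport u)
    (hus : tsupport u ⊆ Ω) (hadm : SPSHOn Ω (fun z => φ z + u z)) :
    ∀ t ∈ Set.Icc (0:ℝ) 1,
      HasDerivWithinAt
        (fun s : ℝ => (((π : ℝ) ^ n)⁻¹ / (n + 1)) * ∑ j ∈ Finset.range (n + 1),
          ∫ z in Ω, s * u z *
            (mixedDet (cHessian (fun w => φ w + s * u w) z) (cHessian φ z) j).re)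
        (((π : ℝ) ^ n)⁻¹ * ∫ z in Ω, u z * (cHessian (fun w => φ w + t * u w) z).det.re)
        (Set.Icc (0:ℝ) 1) t := fun t _ =>
  (energy_derivative_general hΩo (contDiffOn_infty.mp hφ.1 2) (contDiff_infty.mp hu 2) huc
    hus t).hasDerivWithinAt
end
end
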